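/- arXiv:2604.00977 — 5 statements merged into one kernel-verified Lean document; each statement's English description precedes it below -/
import Mathlib

section
/- Let S and A be nonempty finite sets, r : S × A → ℝ a reward function, P a transition kernel assigning to each (s,a) a probability distribution P(·|s,a) on S, γ ∈ (0,1) a discount factor, and π a stationary policy assigning to each state s a probability distribution π(·|s) on A. Fix p ≥ 1. Then the distributional Bellman operator T^π is a γ-contraction with respect to the maximal p-Wasserstein metric: for all return-distribution functions Z₁, Z₂, one has d̄_p(T^π Z₁, T^π Z₂) ≤ γ · d̄_p(Z₁, Z₂). -/
/-!
The transport cost `∫ |x - y| ^ p` behaves well under the two operations making up the Bellman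
operator. If `π i` couples `μ i` and `ν i`, then the mixture `∑ w i • π i` couples the mixtures of
the `μ i` and of the `ν i`, and pushing it forward under `(x, y) ↦ (c + γ x, c + γ y)` couples their
affine images; the cost of the result is `γ ^ p * ∑ w i * cost (π i)`. With near-optimal `π i`, the
optimal cost after the Bellman update is at most `γ ^ p` times the largest optimal cost before it
(`sInf_transportCosts_mixture_le`), and taking `p`-th roots gives the contraction.

Costs are Bochner integrals, so their additivity over the mixture needs `|x - y| ^ p` to be
integrable for every coupling; this is where the finite `p`-th moments are used
(`IsCoupling.integrable_cost`).
-/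

open MeasureTheory

noncomputable section

/-- A coupling of two Borel probability measures on ℝ: a probability measure on ℝ × ℝ
whose first marginal is `μ` and second marginal is `ν`. -/
def IsCoupling (π : Measure (ℝ × ℝ)) (μ ν : Measure ℝ) : Prop :=
  IsProbabilityMeasure π ∧ π.map Prod.fst = μ ∧ π.map Prod.snd = ν

/-- The set of transport costs `∫ |x - y|^p dπ` over all couplings `π` of `μ` and `ν`. -/
def transportCosts (p : ℝ) (μ ν : Measure ℝ) : Set ℝ :=
  {c | ∃ π : Measure (ℝ × ℝ), IsCoupling π μ ν ∧ c = ∫ xy, |xy.1 - xy.2| ^ p ∂π}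

/-- The `p`-Wasserstein distance between two Borel probability measures on ℝ. -/
def Wp (p : ℝ) (μ ν : Measure ℝ) : ℝ :=
  (sInf (transportCosts p μ ν)) ^ (1 / p)

/-- A measure on ℝ has finite `p`-th moment. -/
def HasFiniteMoment (p : ℝ) (μ : Measure ℝ) : Prop :=
  Integrable (fun x => |x| ^ p) μ

/-- A return-distribution function: each `(s,a)` gets a Borel probability measure on ℝ
with finite `p`-th moment. -/
def IsReturnDistFn {S A : Type*} (p : ℝ) (Z : S → A → Measure ℝ) : Prop :=
  ∀ s a, IsProbabilityMeasure (Z s a) ∧ HasFiniteMoment p (Z s a)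

/-- The distributional Bellman operator `T^π`: `(T^π Z)(s,a)` is the pushforward under
`x ↦ r(s,a) + γ x` of the mixture `∑_{s'} ∑_{a'} P(s'|s,a) π(a'|s') Z(s',a')`. -/
def bellmanOp {S A : Type*} [Fintype S] [Fintype A]
    (r : S → A → ℝ) (P : S → A → S → ℝ) (pol : S → A → ℝ) (γ : ℝ)
    (Z : S → A → Measure ℝ) (s : S) (a : A) : Measure ℝ :=
  Measure.map (fun x => r s a + γ * x)
    (∑ s' : S, ∑ a' : A, ENNReal.ofReal (P s a s' * pol s' a') • Z s' a')

/-- The maximal `p`-Wasserstein metric between two return-distribution functions. -/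
def supWass {S A : Type*} [Fintype S] [Fintype A] [Nonempty S] [Nonempty A]
    (p : ℝ) (Z₁ Z₂ : S → A → Measure ℝ) : ℝ :=
  ⨆ sa : S × A, Wp p (Z₁ sa.1 sa.2) (Z₂ sa.1 sa.2)

lemma transportCosts_nonneg {p : ℝ} {μ ν : Measure ℝ} {c : ℝ} (hc : c ∈ transportCosts p μ ν) :
    0 ≤ c := by
  obtain ⟨π, -, rfl⟩ := hc
  exact integral_nonneg fun _ => Real.rpow_nonneg (abs_nonneg _) _

lemma bddBelow_transportCosts (p : ℝ) (μ ν : Measure ℝ) : BddBelow (transportCosts p μ ν) :=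
  ⟨0, fun _ => transportCosts_nonneg⟩

lemma sInf_transportCosts_nonneg (p : ℝ) (μ ν : Measure ℝ) : 0 ≤ sInf (transportCosts p μ ν) :=
  Real.sInf_nonneg fun _ => transportCosts_nonneg

/-- The product measure is a coupling, so the infimum of the costs is a genuine one. -/
lemma transportCosts_nonempty (p : ℝ) (μ ν : Measure ℝ) [IsProbabilityMeasure μ]
    [IsProbabilityMeasure ν] : (transportCosts p μ ν).Nonempty :=
  ⟨_, μ.prod ν, ⟨inferInstance, by simp [Measure.map_fst_prod], by simp [Measure.map_snd_prod]⟩,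
    rfl⟩

lemma abs_sub_rpow_le {p : ℝ} (hp : 0 ≤ p) (x y : ℝ) :
    |x - y| ^ p ≤ 2 ^ p * (|x| ^ p + |y| ^ p) := by
  have hx := Real.rpow_nonneg (abs_nonneg x) p
  have hy := Real.rpow_nonneg (abs_nonneg y) p
  have hmax : |x - y| ≤ 2 * max |x| |y| := by
    linarith [abs_sub x y, le_max_left |x| |y|, le_max_right |x| |y|]
  calc |x - y| ^ p ≤ (2 * max |x| |y|) ^ p := Real.rpow_le_rpow (abs_nonneg _) hmax hp
    _ = 2 ^ p * (max |x| |y|) ^ p := Real.mul_rpow (by norm_num) (by positivity)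
    _ ≤ 2 ^ p * (|x| ^ p + |y| ^ p) := by
      gcongr
      rcases max_choice |x| |y| with h | h <;> rw [h] <;> linarith

lemma IsCoupling.integrable_cost {p : ℝ} (hp : 0 ≤ p) {π : Measure (ℝ × ℝ)} {μ ν : Measure ℝ}
    (hπ : IsCoupling π μ ν) (hμ : HasFiniteMoment p μ) (hν : HasFiniteMoment p ν) :
    Integrable (fun xy : ℝ × ℝ => |xy.1 - xy.2| ^ p) π := by
  obtain ⟨-, rfl, rfl⟩ := hπ
  have h1 : Integrable (fun xy : ℝ × ℝ => |xy.1| ^ p) π := hμ.comp_measurable measurable_fst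
  have h2 : Integrable (fun xy : ℝ × ℝ => |xy.2| ^ p) π := hν.comp_measurable measurable_snd
  refine ((h1.add h2).const_mul (2 ^ p)).mono' (by fun_prop) (.of_forall fun xy => ?_)
  rw [Real.norm_of_nonneg (Real.rpow_nonneg (abs_nonneg _) _)]
  exact abs_sub_rpow_le hp _ _

/-- A mixture of couplings, pushed forward diagonally under a measurable map, couples the
pushforwards of the mixtures of the marginals. -/
lemma IsCoupling.map_mixture {ι : Type*} [Fintype ι] {w : ι → ℝ} (hw : ∀ i, 0 ≤ w i)
    (hw1 : ∑ i, w i = 1) {f : ℝ → ℝ} (hf : Measurable f) {π : ι → Measure (ℝ × ℝ)}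
    {μ ν : ι → Measure ℝ} (hπ : ∀ i, IsCoupling (π i) (μ i) (ν i)) :
    IsCoupling ((∑ i, ENNReal.ofReal (w i) • π i).map (Prod.map f f))
      ((∑ i, ENNReal.ofReal (w i) • μ i).map f) ((∑ i, ENNReal.ofReal (w i) • ν i).map f) := by
  have hff : Measurable (Prod.map f f) := hf.prodMap hf
  refine ⟨?_, ?_, ?_⟩
  · have : IsProbabilityMeasure (∑ i, ENNReal.ofReal (w i) • π i) := by
      refine ⟨?_⟩
      have h1 : ∀ i, π i Set.univ = 1 := fun i => (hπ i).1.measure_univ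
      simp [Measure.finsetSum_apply, h1, ← ENNReal.ofReal_sum_of_nonneg fun i _ => hw i, hw1]
    exact Measure.isProbabilityMeasure_map hff.aemeasurable
  · rw [Measure.map_map measurable_fst hff, Prod.map_fst', ← Measure.map_map hf measurable_fst,
      Measure.map_finset_sum measurable_fst.aemeasurable]
    simp_rw [Measure.map_smul, (hπ _).2.1]
  · rw [Measure.map_map measurable_snd hff, Prod.map_snd', ← Measure.map_map hf measurable_snd,
      Measure.map_finset_sum measurable_snd.aemeasurable]
    simp_rw [Measure.map_smul, (hπ _).2.2]

/-- If each pair `μ i`, `ν i` has optimal cost at most `C`, then the images of their mixtures under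
`x ↦ c + γ x` have optimal cost at most `γ ^ p * C`. -/
lemma sInf_transportCosts_mixture_le {ι : Type*} [Fintype ι] {p : ℝ} (hp : 0 ≤ p) {w : ι → ℝ}
    (hw : ∀ i, 0 ≤ w i) (hw1 : ∑ i, w i = 1) (c : ℝ) {γ : ℝ} (hγ : 0 ≤ γ) {μ ν : ι → Measure ℝ}
    (hμ : ∀ i, IsProbabilityMeasure (μ i) ∧ HasFiniteMoment p (μ i))
    (hν : ∀ i, IsProbabilityMeasure (ν i) ∧ HasFiniteMoment p (ν i)) {C : ℝ}
    (hC : ∀ i, sInf (transportCosts p (μ i) (ν i)) ≤ C) :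
    sInf (transportCosts p ((∑ i, ENNReal.ofReal (w i) • μ i).map fun x => c + γ * x)
      ((∑ i, ENNReal.ofReal (w i) • ν i).map fun x => c + γ * x)) ≤ γ ^ p * C := by
  have key : ∀ C' > C, sInf (transportCosts p
      ((∑ i, ENNReal.ofReal (w i) • μ i).map fun x => c + γ * x)
      ((∑ i, ENNReal.ofReal (w i) • ν i).map fun x => c + γ * x)) ≤ γ ^ p * C' := by
    intro C' hC'
    have hex : ∀ i, ∃ π, IsCoupling π (μ i) (ν i) ∧ ∫ xy, |xy.1 - xy.2| ^ p ∂π < C' := by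
      intro i
      have := (hμ i).1
      have := (hν i).1
      obtain ⟨_, ⟨π, hπ, rfl⟩, hlt⟩ :=
        exists_lt_of_csInf_lt (transportCosts_nonempty p (μ i) (ν i)) ((hC i).trans_lt hC')
      exact ⟨π, hπ, hlt⟩
    choose π hπ hcost using hex
    have hf : Measurable fun x : ℝ => c + γ * x := by fun_prop
    refine (csInf_le (bddBelow_transportCosts _ _ _)
      ⟨_, IsCoupling.map_mixture hw hw1 hf hπ, rfl⟩).trans ?_
    rw [integral_map (hf.prodMap hf).aemeasurable (by fun_prop)]
    have hscale : ∀ xy : ℝ × ℝ, |(Prod.map (fun x => c + γ * x) (fun x => c + γ * x) xy).1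
        - (Prod.map (fun x => c + γ * x) (fun x => c + γ * x) xy).2| ^ p
        = γ ^ p * |xy.1 - xy.2| ^ p := by
      intro xy
      rw [← Real.mul_rpow hγ (abs_nonneg _), Prod.map_fst, Prod.map_snd, add_sub_add_left_eq_sub,
        ← mul_sub, abs_mul, abs_of_nonneg hγ]
    simp_rw [hscale]
    rw [integral_const_mul, integral_finsetSum_measure fun i _ =>
      ((hπ i).integrable_cost hp (hμ i).2 (hν i).2).smul_measure ENNReal.ofReal_ne_top]
    gcongr
    calc ∑ i, ∫ xy, |xy.1 - xy.2| ^ p ∂(ENNReal.ofReal (w i) • π i)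
        = ∑ i, w i * ∫ xy, |xy.1 - xy.2| ^ p ∂(π i) := by
          simp [integral_smul_measure, ENNReal.toReal_ofReal (hw _)]
      _ ≤ ∑ i, w i * C' :=
          Finset.sum_le_sum fun i _ => mul_le_mul_of_nonneg_left (hcost i).le (hw i)
      _ = C' := by rw [← Finset.sum_mul, hw1, one_mul]
  -- Let `C'` decrease to `C`.
  have hcont : Continuous fun C' : ℝ => γ ^ p * C' := by fun_prop
  exact ge_of_tendsto (hcont.continuousWithinAt (s := Set.Ioi C) (x := C))
    (Filter.eventually_of_mem self_mem_nhdsWithin key)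

/-- The distributional Bellman operator is a `γ`-contraction in the maximal
`p`-Wasserstein metric. -/
theorem bellmanOp_contraction {S A : Type*} [Fintype S] [Fintype A] [Nonempty S] [Nonempty A]
    (p : ℝ) (hp : 1 ≤ p)
    (r : S → A → ℝ) (P : S → A → S → ℝ) (pol : S → A → ℝ) (γ : ℝ)
    (hγ : γ ∈ Set.Ioo (0 : ℝ) 1)
    (hP : ∀ s a, (∀ s', 0 ≤ P s a s') ∧ ∑ s', P s a s' = 1)
    (hpol : ∀ s, (∀ a, 0 ≤ pol s a) ∧ ∑ a, pol s a = 1)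
    (Z₁ Z₂ : S → A → Measure ℝ)
    (hZ₁ : IsReturnDistFn p Z₁) (hZ₂ : IsReturnDistFn p Z₂) :
    supWass p (bellmanOp r P pol γ Z₁) (bellmanOp r P pol γ Z₂) ≤ γ * supWass p Z₁ Z₂ := by
  have hp0 : 0 < p := by linarith
  set D := supWass p Z₁ Z₂ with hD
  have hW : ∀ s a, Wp p (Z₁ s a) (Z₂ s a) ≤ D := fun s a =>
    le_ciSup (f := fun sa : S × A => Wp p (Z₁ sa.1 sa.2) (Z₂ sa.1 sa.2))
      (Set.finite_range _).bddAbove (s, a)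
  have hWnn : ∀ s a, 0 ≤ Wp p (Z₁ s a) (Z₂ s a) := fun s a =>
    Real.rpow_nonneg (sInf_transportCosts_nonneg _ _ _) _
  have hDnn : 0 ≤ D := (hWnn (Classical.arbitrary S) (Classical.arbitrary A)).trans (hW _ _)
  have hC : ∀ i : S × A, sInf (transportCosts p (Z₁ i.1 i.2) (Z₂ i.1 i.2)) ≤ D ^ p := by
    intro i
    have h := Real.rpow_le_rpow (hWnn i.1 i.2) (hW i.1 i.2) hp0.le
    rwa [Wp, ← Real.rpow_mul (sInf_transportCosts_nonneg _ _ _), one_div_mul_cancel hp0.ne',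
      Real.rpow_one] at h
  refine ciSup_le fun ⟨s, a⟩ => ?_
  -- The weights of the mixture, indexed by state-action pairs.
  have hw : ∀ i : S × A, 0 ≤ P s a i.1 * pol i.1 i.2 := fun i =>
    mul_nonneg ((hP s a).1 _) ((hpol _).1 _)
  have hw1 : ∑ i : S × A, P s a i.1 * pol i.1 i.2 = 1 := by
    simp [Fintype.sum_prod_type, ← Finset.mul_sum, (hpol _).2, (hP s a).2]
  have hcost := sInf_transportCosts_mixture_le hp0.le hw hw1 (r s a) hγ.1.le
    (fun i => hZ₁ i.1 i.2) (fun i => hZ₂ i.1 i.2) hC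
  rw [Fintype.sum_prod_type, Fintype.sum_prod_type, ← Real.mul_rpow hγ.1.le hDnn] at hcost
  have hroot := Real.rpow_le_rpow (sInf_transportCosts_nonneg _ _ _) hcost
    (one_div_nonneg.2 hp0.le)
  rwa [← Real.rpow_mul (mul_nonneg hγ.1.le hDnn), mul_one_div_cancel hp0.ne', Real.rpow_one]
    at hroot
end
end

section
/- Let S and A be nonempty finite sets, r : S × A → ℝ, P a transition kernel on S, γ ∈ (0,1), π a stationary policy, and p ≥ 1. Then the distributional Bellman operator T^π has at most one fixed point in the space of return-distribution functions with finite p-th moments: if T^π Z₁ = Z₁ and T^π Z₂ = Z₂, then Z₁(s,a) = Z₂(s,a) for every (s,a) ∈ S × A. -/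
/-!
The proof compares characteristic functions. Writing `φ_{s,a}` for the characteristic function
of `Z(s,a)`, the fixed-point equation reads
`φ_{s,a}(t) = e^{i t r(s,a)} ∑ P(s'|s,a) π(a'|s') φ_{s',a'}(γ t)`,
so the difference `d_{s,a}` of the characteristic functions of two fixed points satisfies
`max |d(t)| ≤ max |d(γ t)|`, the weights being nonnegative with total mass one. Iterating gives
`max |d(t)| ≤ max |d(γ ^ n t)|`, which tends to `max |d(0)| = 0` because characteristic functions
are continuous and equal `1` at the origin. Hence `d = 0`, and a finite measure is determined by
its characteristic function.
-/

open MeasureTheory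

noncomputable section

lemma charFun_bellmanOp {S A : Type*} [Fintype S] [Fintype A]
    (r : S → A → ℝ) (P : S → A → S → ℝ) (pol : S → A → ℝ) (γ : ℝ)
    (hP : ∀ s a s', 0 ≤ P s a s') (hpol : ∀ s a, 0 ≤ pol s a)
    (Z : S → A → Measure ℝ) (hZ : ∀ s a, IsProbabilityMeasure (Z s a)) (s : S) (a : A) (t : ℝ) :
    charFun (bellmanOp r P pol γ Z s a) t =
      Complex.exp (t * r s a * Complex.I) *
        ∑ s' : S, ∑ a' : A, ((P s a s' * pol s' a' : ℝ) : ℂ) * charFun (Z s' a') (γ * t) := by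
  have hint : ∀ s' a', Integrable (fun x : ℝ => Complex.exp (t * (r s a + γ * x : ℝ) * Complex.I))
      (ENNReal.ofReal (P s a s' * pol s' a') • Z s' a') := by
    intro s' a'
    refine Integrable.smul_measure ?_ ENNReal.ofReal_ne_top
    have := hZ s' a'
    refine Integrable.of_bound (C := 1) (by fun_prop) (Filter.Eventually.of_forall fun x => ?_)
    rw [← Complex.ofReal_mul, Complex.norm_exp_ofReal_mul_I]
  rw [charFun_apply_real, bellmanOp, integral_map (by fun_prop) (by fun_prop),
    integral_finsetSum_measure (fun s' _ => integrable_finsetSum_measure.2 fun a' _ => hint s' a'),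
    Finset.mul_sum]
  refine Finset.sum_congr rfl fun s' _ => ?_
  rw [integral_finsetSum_measure (fun a' _ => hint s' a'), Finset.mul_sum]
  refine Finset.sum_congr rfl fun a' _ => ?_
  rw [integral_smul_measure, ENNReal.toReal_ofReal (mul_nonneg (hP _ _ _) (hpol _ _)),
    charFun_apply_real, Complex.real_smul, mul_left_comm]
  congr 1
  rw [← integral_const_mul]
  refine integral_congr_ae (Filter.Eventually.of_forall fun x => ?_)
  dsimp only
  rw [← Complex.exp_add]
  congr 1
  push_cast
  ring

/-- The distributional Bellman operator has at most one fixed point among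
return-distribution functions with finite `p`-th moments. -/
theorem bellmanOp_fixedPoint_unique {S A : Type*} [Fintype S] [Fintype A]
    [Nonempty S] [Nonempty A]
    (p : ℝ) (hp : 1 ≤ p)
    (r : S → A → ℝ) (P : S → A → S → ℝ) (pol : S → A → ℝ) (γ : ℝ)
    (hγ : γ ∈ Set.Ioo (0 : ℝ) 1)
    (hP : ∀ s a, (∀ s', 0 ≤ P s a s') ∧ ∑ s', P s a s' = 1)
    (hpol : ∀ s, (∀ a, 0 ≤ pol s a) ∧ ∑ a, pol s a = 1)
    (Z₁ Z₂ : S → A → Measure ℝ)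
    (hZ₁ : IsReturnDistFn p Z₁) (hZ₂ : IsReturnDistFn p Z₂)
    (hfix₁ : ∀ s a, bellmanOp r P pol γ Z₁ s a = Z₁ s a)
    (hfix₂ : ∀ s a, bellmanOp r P pol γ Z₂ s a = Z₂ s a) :
    ∀ s a, Z₁ s a = Z₂ s a := by
  have i₁ : ∀ s a, IsProbabilityMeasure (Z₁ s a) := fun s a => (hZ₁ s a).1
  have i₂ : ∀ s a, IsProbabilityMeasure (Z₂ s a) := fun s a => (hZ₂ s a).1
  set d : S → A → ℝ → ℂ := fun s a t => charFun (Z₁ s a) t - charFun (Z₂ s a) t with hd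
  have hrec : ∀ s a t, d s a t = Complex.exp (t * r s a * Complex.I) *
      ∑ s' : S, ∑ a' : A, ((P s a s' * pol s' a' : ℝ) : ℂ) * d s' a' (γ * t) := by
    intro s a t
    have h₁ := charFun_bellmanOp r P pol γ (fun s a => (hP s a).1) (fun s => (hpol s).1) Z₁ i₁ s a t
    have h₂ := charFun_bellmanOp r P pol γ (fun s a => (hP s a).1) (fun s => (hpol s).1) Z₂ i₂ s a t
    rw [hfix₁] at h₁
    rw [hfix₂] at h₂
    simp only [hd, h₁, h₂, mul_sub, Finset.sum_sub_distrib]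
  have hstep : ∀ (ε t : ℝ), (∀ s a, ‖d s a (γ * t)‖ ≤ ε) → ∀ s a, ‖d s a t‖ ≤ ε := by
    intro ε t h s a
    rw [hrec, norm_mul, ← Complex.ofReal_mul, Complex.norm_exp_ofReal_mul_I, one_mul]
    calc ‖∑ s' : S, ∑ a' : A, ((P s a s' * pol s' a' : ℝ) : ℂ) * d s' a' (γ * t)‖
        ≤ ∑ s' : S, ∑ a' : A, P s a s' * pol s' a' * ε := by
          refine norm_sum_le_of_le _ fun s' _ => norm_sum_le_of_le _ fun a' _ => ?_
          have hw : 0 ≤ P s a s' * pol s' a' := mul_nonneg ((hP s a).1 s') ((hpol s').1 a')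
          rw [norm_mul, Complex.norm_real, Real.norm_of_nonneg hw]
          exact mul_le_mul_of_nonneg_left (h s' a') hw
      _ = ε := by
          simp only [← Finset.sum_mul, ← Finset.mul_sum, (hpol _).2, mul_one, (hP s a).2, one_mul]
  have hiter : ∀ (n : ℕ) (ε t : ℝ), (∀ s a, ‖d s a (γ ^ n * t)‖ ≤ ε) → ∀ s a, ‖d s a t‖ ≤ ε := by
    intro n
    induction n with
    | zero => intro ε t h; simpa using h
    | succ n ih =>
      intro ε t h
      refine ih ε t (hstep ε _ ?_)
      simpa only [pow_succ', mul_assoc] using h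
  have hlim : ∀ s a t, Filter.Tendsto (fun n : ℕ => ‖d s a (γ ^ n * t)‖) Filter.atTop (nhds 0) := by
    intro s a t
    have hc : Continuous (d s a) := continuous_charFun.sub continuous_charFun
    have h0 : d s a 0 = 0 := by simp [hd]
    have hg : Filter.Tendsto (fun n : ℕ => γ ^ n * t) Filter.atTop (nhds 0) := by
      simpa using (tendsto_pow_atTop_nhds_zero_of_lt_one hγ.1.le hγ.2).mul_const t
    simpa [h0] using ((hc.tendsto 0).comp hg).norm
  intro s a
  refine Measure.ext_of_charFun (funext fun t => sub_eq_zero.1 (norm_le_zero_iff.1 ?_))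
  refine le_of_forall_pos_le_add fun ε hε => ?_
  rw [zero_add]
  -- Finiteness of `S` and `A` gives a single `n` that works for all state-action pairs.
  have hev : ∀ᶠ n : ℕ in Filter.atTop, ∀ s a, ‖d s a (γ ^ n * t)‖ ≤ ε :=
    Filter.eventually_all.2 fun s => Filter.eventually_all.2 fun a =>
      (hlim s a t).eventually_le_const hε
  obtain ⟨n, hn⟩ := hev.exists
  exact hiter n ε t hn s a
end
end

section
/- Let μ be a Borel probability measure on ℝ with finite first moment, let τ ∈ (0,1), and define the pinball loss ρ_τ(u) = u · (τ − 1{u < 0}). Then a real number θ minimizes the function θ ↦ ∫ ρ_τ(y − θ) dμ(y) over ℝ if and only if θ is a τ-quantile of μ, i.e. μ((−∞, θ)) ≤ τ ≤ μ((−∞, θ]). -/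
/-!
Write `L θ = ∫ ρ_τ(y − θ) dμ(y)`. For `a ≤ b`, the increment `ρ_τ(y − b) − ρ_τ(y − a)` lies
between `(1{y ≤ a} − τ)(b − a)` and `(1{y < b} − τ)(b − a)`. Integrating gives
`(μ(−∞, a] − τ)(b − a) ≤ L b − L a ≤ (μ(−∞, b) − τ)(b − a)`
(`le_risk_sub` and `risk_sub_le`).
A quantile is therefore a minimizer: use the lower bound to its right and the upper bound to its
left. Conversely, if `θ` is a minimizer, the upper bound on `[θ, b]` gives `τ ≤ μ(−∞, b)` for all
`b > θ`, and the lower bound on `[a, θ]` gives `μ(−∞, a] ≤ τ` for all `a < θ`; letting `b ↓ θ` and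
`a ↑ θ` yields the two quantile inequalities.
-/

open MeasureTheory

noncomputable section

/-- The pinball (quantile regression) loss `ρ_τ(u) = u·(τ − 1{u < 0})`. -/
def pinball (τ u : ℝ) : ℝ := u * (τ - if u < 0 then 1 else 0)

lemma pinball_eq (τ u : ℝ) : pinball τ u = τ * u + max (-u) 0 := by
  unfold pinball
  split_ifs with h
  · rw [max_eq_left (by linarith)]; ring
  · rw [max_eq_right (by linarith)]; ring

lemma integrable_pinball {μ : Measure ℝ} [IsProbabilityMeasure μ]
    (hmom : Integrable (fun x => |x|) μ) (τ θ : ℝ) :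
    Integrable (fun y => pinball τ (y - θ)) μ := by
  have hid : Integrable (fun y : ℝ => y) μ :=
    (integrable_norm_iff measurable_id.aestronglyMeasurable).1 hmom
  have hsub : Integrable (fun y : ℝ => y - θ) μ := hid.sub (integrable_const θ)
  simp only [pinball_eq]
  exact (hsub.const_mul τ).add hsub.neg.pos_part

lemma le_pinball_sub {τ a b : ℝ} (hab : a ≤ b) (y : ℝ) :
    ((Set.Iic a).indicator 1 y - τ) * (b - a) ≤ pinball τ (y - b) - pinball τ (y - a) := by
  simp only [pinball, Set.indicator_apply, Set.mem_Iic, Pi.one_apply]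
  split_ifs <;> nlinarith

lemma pinball_sub_le {τ a b : ℝ} (hab : a ≤ b) (y : ℝ) :
    pinball τ (y - b) - pinball τ (y - a) ≤ ((Set.Iio b).indicator 1 y - τ) * (b - a) := by
  simp only [pinball, Set.indicator_apply, Set.mem_Iio, Pi.one_apply]
  split_ifs <;> nlinarith

lemma integrable_indicator_one {μ : Measure ℝ} [IsProbabilityMeasure μ] {s : Set ℝ}
    (hs : MeasurableSet s) : Integrable (s.indicator (1 : ℝ → ℝ)) μ :=
  (integrable_const (1 : ℝ)).indicator hs

lemma integral_indicator_sub_mul {μ : Measure ℝ} [IsProbabilityMeasure μ] {s : Set ℝ}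
    (hs : MeasurableSet s) (τ c : ℝ) :
    ∫ y, (s.indicator 1 y - τ) * c ∂μ = (μ.real s - τ) * c := by
  rw [integral_mul_const, integral_sub (integrable_indicator_one hs) (integrable_const τ),
    integral_indicator_one hs]
  simp

lemma le_risk_sub {μ : Measure ℝ} [IsProbabilityMeasure μ]
    (hmom : Integrable (fun x => |x|) μ) (τ : ℝ) {a b : ℝ} (hab : a ≤ b) :
    (μ.real (Set.Iic a) - τ) * (b - a) ≤
      ∫ y, pinball τ (y - b) ∂μ - ∫ y, pinball τ (y - a) ∂μ := by
  rw [← integral_indicator_sub_mul measurableSet_Iic,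
    ← integral_sub (integrable_pinball hmom τ b) (integrable_pinball hmom τ a)]
  exact integral_mono
    (((integrable_indicator_one measurableSet_Iic).sub (integrable_const τ)).mul_const _)
    ((integrable_pinball hmom τ b).sub (integrable_pinball hmom τ a)) (le_pinball_sub hab)

lemma risk_sub_le {μ : Measure ℝ} [IsProbabilityMeasure μ]
    (hmom : Integrable (fun x => |x|) μ) (τ : ℝ) {a b : ℝ} (hab : a ≤ b) :
    ∫ y, pinball τ (y - b) ∂μ - ∫ y, pinball τ (y - a) ∂μ ≤
      (μ.real (Set.Iio b) - τ) * (b - a) := by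
  rw [← integral_indicator_sub_mul measurableSet_Iio,
    ← integral_sub (integrable_pinball hmom τ b) (integrable_pinball hmom τ a)]
  exact integral_mono ((integrable_pinball hmom τ b).sub (integrable_pinball hmom τ a))
    (((integrable_indicator_one measurableSet_Iio).sub (integrable_const τ)).mul_const _)
    (pinball_sub_le hab)

/-- Right continuity of the distribution function. -/
lemma le_real_Iic_of_forall_gt {μ : Measure ℝ} [IsProbabilityMeasure μ] {τ θ : ℝ}
    (h : ∀ b, θ < b → τ ≤ μ.real (Set.Iic b)) : τ ≤ μ.real (Set.Iic θ) := by
  rw [← ProbabilityTheory.cdf_eq_real]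
  refine ge_of_tendsto
    (((ProbabilityTheory.cdf μ).right_continuous θ).mono Set.Ioi_subset_Ici_self) ?_
  filter_upwards [self_mem_nhdsWithin] with b hb
  rw [ProbabilityTheory.cdf_eq_real]
  exact h b hb

/-- The mass of `(−∞, θ)` is the left limit at `θ` of the distribution function. -/
lemma real_Iio_le_of_forall_lt {μ : Measure ℝ} [IsProbabilityMeasure μ] {τ θ : ℝ} (hτ : 0 ≤ τ)
    (h : ∀ a, a < θ → μ.real (Set.Iic a) ≤ τ) : μ.real (Set.Iio θ) ≤ τ := by
  have key : μ (Set.Iio θ) =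
      ENNReal.ofReal (Function.leftLim (ProbabilityTheory.cdf μ) θ - 0) := by
    conv_lhs => rw [← ProbabilityTheory.measure_cdf μ]
    exact StieltjesFunction.measure_Iio _ (ProbabilityTheory.tendsto_cdf_atBot μ) θ
  rw [measureReal_def, key, sub_zero]
  refine ENNReal.toReal_le_of_le_ofReal hτ (ENNReal.ofReal_le_ofReal ?_)
  refine le_of_tendsto ((ProbabilityTheory.monotone_cdf μ).tendsto_leftLim θ) ?_
  filter_upwards [self_mem_nhdsWithin] with a ha
  rw [ProbabilityTheory.cdf_eq_real]
  exact h a ha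

/-- A real number `θ` minimizes the expected pinball loss `θ ↦ ∫ ρ_τ(y − θ) dμ(y)`
if and only if `θ` is a `τ`-quantile of `μ`: `μ((−∞,θ)) ≤ τ ≤ μ((−∞,θ])`. -/
theorem pinball_min_iff_quantile (μ : Measure ℝ) (hμ : IsProbabilityMeasure μ)
    (hmom : Integrable (fun x => |x|) μ)
    (τ : ℝ) (hτ : τ ∈ Set.Ioo (0 : ℝ) 1) (θ : ℝ) :
    (∀ θ' : ℝ, ∫ y, pinball τ (y - θ) ∂μ ≤ ∫ y, pinball τ (y - θ') ∂μ) ↔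
      ((μ (Set.Iio θ)).toReal ≤ τ ∧ τ ≤ (μ (Set.Iic θ)).toReal) := by
  simp only [← measureReal_def]
  constructor
  · intro hmin
    refine ⟨real_Iio_le_of_forall_lt hτ.1.le fun a ha => ?_,
      le_real_Iic_of_forall_gt fun b hb => ?_⟩
    · have h := le_risk_sub hmom τ ha.le
      have hm := hmin a
      by_contra! hlt
      have := mul_pos (sub_pos.2 hlt) (sub_pos.2 ha)
      linarith
    · have h := risk_sub_le hmom τ hb.le
      have hm := hmin b
      have hle : μ.real (Set.Iio b) ≤ μ.real (Set.Iic b) := measureReal_mono Set.Iio_subset_Iic_self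
      refine le_trans ?_ hle
      by_contra! hlt
      have := mul_pos (sub_pos.2 hlt) (sub_pos.2 hb)
      linarith
  · rintro ⟨h1, h2⟩ θ'
    rcases le_total θ θ' with hle | hle
    · have h := le_risk_sub hmom τ hle
      have := mul_nonneg (sub_nonneg.2 h2) (sub_nonneg.2 hle)
      linarith
    · have h := risk_sub_le hmom τ hle
      have := mul_nonneg (sub_nonneg.2 h1) (sub_nonneg.2 hle)
      linarith
end
end

section
/- Let μ be a Borel probability measure on ℝ with finite first moment and quantile function F_μ^{-1}, and let N be a positive integer. For real numbers θ_1, …, θ_N, let ν_θ = (1/N) Σ_{i=1}^N δ_{θ_i} denote the uniform mixture of Dirac measures at θ_1, …, θ_N. Then the choice θ_i = F_μ^{-1}((2i − 1)/(2N)) for i = 1, …, N minimizes the 1-Wasserstein distance W_1(μ, ν_θ) over all choices of (θ_1, …, θ_N) ∈ ℝ^N. -/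
/-!
The proof compares CDFs pointwise. Writing `|x - y|` as the length of the set of thresholds `t`
separating `x` and `y`, Tonelli gives the cost of a coupling `π` as
`∫ π {exactly one of x ≤ t, y ≤ t holds} dt` (`cost_eq_lintegral`).

For any coupling of `μ` and `ν` the integrand is at least `|F_μ(t) - F_ν(t)|` (`abs_cdf_sub_le`).
For the monotone coupling of `μ` with the quantile mixture, i.e. the law of
`(F_μ⁻¹(τ), F_μ⁻¹(midpoint of the cell of τ))` with `τ` uniform on `(0, 1)`, the events `x ≤ t` and
`y ≤ t` are nested, so equality holds (`monotoneCoupling_apply`).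

It remains to compare `|F_μ(t) - F_ν(t)|` over mixtures `ν` of `N` Diracs. Each `F_ν(t)` lies in the
grid `{0, 1/N, …, 1}`, and for the quantile mixture it equals `⌊N F_μ(t) + 1/2⌋ / N`, a grid point
nearest to `F_μ(t)` (`cdf_quantile_mix_nearest`). In particular the `θ i` need not be sorted.
-/

open MeasureTheory

noncomputable section

/-- The cumulative distribution function of a measure on ℝ. -/
def cdf (μ : Measure ℝ) (x : ℝ) : ℝ := (μ (Set.Iic x)).toReal

/-- The quantile function of a measure on ℝ: the generalized inverse of its CDF. -/
def quantileFn (μ : Measure ℝ) (τ : ℝ) : ℝ := sInf {x : ℝ | τ ≤ cdf μ x}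

/-- The uniform mixture of Dirac measures at `θ 0, …, θ (N-1)`. -/
def diracMix (N : ℕ) (θ : Fin N → ℝ) : Measure ℝ :=
  ∑ i : Fin N, ENNReal.ofReal (1 / N) • Measure.dirac (θ i)

/-- The length `|x - y|` counts the thresholds `t` that separate `x` from `y`. -/
lemma volume_between (x y : ℝ) :
    volume {t : ℝ | ¬ (x ≤ t ↔ y ≤ t)} = ENNReal.ofReal |x - y| := by
  have : {t : ℝ | ¬ (x ≤ t ↔ y ≤ t)} = Set.Ico (min x y) (max x y) := by
    ext t
    simp only [Set.mem_ofPred_eq, Set.mem_Ico, min_le_iff, lt_max_iff]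
    grind
  rw [this, Real.volume_Ico, max_sub_min_eq_abs']

/-- Layer-cake form of the transport cost: by Tonelli, it is the integral over thresholds `t` of the
mass that `π` moves across `t`. -/
lemma cost_eq_lintegral (π : Measure (ℝ × ℝ)) [IsProbabilityMeasure π] :
    ∫⁻ xy, ENNReal.ofReal |xy.1 - xy.2| ∂π
      = ∫⁻ t : ℝ, π {xy | ¬ (xy.1 ≤ t ↔ xy.2 ≤ t)} := by
  have hS : MeasurableSet {z : (ℝ × ℝ) × ℝ | ¬ (z.1.1 ≤ z.2 ↔ z.1.2 ≤ z.2)} := by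
    have h1 : MeasurableSet {z : (ℝ × ℝ) × ℝ | z.1.1 ≤ z.2} :=
      measurableSet_le (by fun_prop) (by fun_prop)
    have h2 : MeasurableSet {z : (ℝ × ℝ) × ℝ | z.1.2 ≤ z.2} :=
      measurableSet_le (by fun_prop) (by fun_prop)
    exact (MeasurableSet.iff h1 h2).compl
  have e1 := Measure.prod_apply (μ := π) (ν := (volume : Measure ℝ)) hS
  have e2 := Measure.prod_apply_symm (μ := π) (ν := (volume : Measure ℝ)) hS
  rw [e1] at e2
  simp only [Set.preimage_ofPred_eq] at e2
  rw [← e2]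
  exact lintegral_congr fun xy => (volume_between _ _).symm

lemma coupling_cdf {π : Measure (ℝ × ℝ)} {μ ν : Measure ℝ} (h : IsCoupling π μ ν) (t : ℝ) :
    cdf μ t = π.real {xy | xy.1 ≤ t} ∧ cdf ν t = π.real {xy | xy.2 ≤ t} := by
  obtain ⟨_, rfl, rfl⟩ := h
  constructor
  · rw [cdf, Measure.map_apply measurable_fst measurableSet_Iic]; rfl
  · rw [cdf, Measure.map_apply measurable_snd measurableSet_Iic]; rfl

lemma setOf_not_iff_eq_symmDiff (t : ℝ) : {xy : ℝ × ℝ | ¬ (xy.1 ≤ t ↔ xy.2 ≤ t)}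
    = symmDiff {xy : ℝ × ℝ | xy.1 ≤ t} {xy : ℝ × ℝ | xy.2 ≤ t} := by
  ext xy
  simp only [Set.mem_symmDiff, Set.mem_ofPred_eq]
  tauto

lemma measurableSet_fst_le (t : ℝ) : MeasurableSet {xy : ℝ × ℝ | xy.1 ≤ t} :=
  measurableSet_le measurable_fst measurable_const

lemma measurableSet_snd_le (t : ℝ) : MeasurableSet {xy : ℝ × ℝ | xy.2 ≤ t} :=
  measurableSet_le measurable_snd measurable_const

/-- Any coupling moves at least mass `|F_μ(t) - F_ν(t)|` across the threshold `t`. -/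
lemma abs_cdf_sub_le {π : Measure (ℝ × ℝ)} {μ ν : Measure ℝ} (h : IsCoupling π μ ν) (t : ℝ) :
    ENNReal.ofReal |cdf μ t - cdf ν t| ≤ π {xy | ¬ (xy.1 ≤ t ↔ xy.2 ≤ t)} := by
  have := h.1
  rw [(coupling_cdf h t).1, (coupling_cdf h t).2, setOf_not_iff_eq_symmDiff]
  refine ENNReal.ofReal_le_of_le_toReal ?_
  exact abs_measureReal_sub_le_measureReal_symmDiff
    (measurableSet_fst_le t).nullMeasurableSet (measurableSet_snd_le t).nullMeasurableSet

/-- The Galois connection between quantile function and CDF. It needs `0 < τ < 1`: otherwise the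
set defining the quantile may be empty or unbounded below. -/
lemma quantileFn_le_iff (μ : Measure ℝ) [IsProbabilityMeasure μ] {τ : ℝ}
    (h : τ ∈ Set.Ioo (0 : ℝ) 1) (t : ℝ) : quantileFn μ τ ≤ t ↔ τ ≤ cdf μ t := by
  have hc : ∀ x, cdf μ x = ProbabilityTheory.cdf μ x := fun x =>
    (ProbabilityTheory.cdf_eq_real μ x).symm
  unfold quantileFn
  simp only [hc]
  set F := ProbabilityTheory.cdf μ
  have hne : {x : ℝ | τ ≤ F x}.Nonempty :=
    ((ProbabilityTheory.tendsto_cdf_atTop μ).eventually_const_le h.2).exists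
  obtain ⟨b, hb⟩ := ((ProbabilityTheory.tendsto_cdf_atBot μ).eventually_lt_const h.1).exists
  have hbd : BddBelow {x : ℝ | τ ≤ F x} := by
    refine ⟨b, fun x hx => le_of_lt ?_⟩
    by_contra! hxb
    exact absurd (hx.trans (F.mono hxb)) (not_le.2 hb)
  refine ⟨fun hle => ?_, fun ht => csInf_le hbd ht⟩
  -- the infimum is attained because `F` is right-continuous
  have hmem : τ ≤ F (sInf {x : ℝ | τ ≤ F x}) := by
    have hr := (F.right_continuous (sInf {x : ℝ | τ ≤ F x})).mono_left
      (nhdsWithin_mono _ Set.Ioi_subset_Ici_self)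
    refine ge_of_tendsto hr ?_
    filter_upwards [self_mem_nhdsWithin] with y hy
    obtain ⟨x, hx, hxy⟩ := exists_lt_of_csInf_lt hne hy
    exact le_trans hx (F.mono hxy.le)
  exact hmem.trans (F.mono hle)

lemma quantileFn_monotoneOn (μ : Measure ℝ) [IsProbabilityMeasure μ] :
    MonotoneOn (quantileFn μ) (Set.Ioo 0 1) := by
  intro a ha b hb hab
  rw [quantileFn_le_iff μ ha]
  exact hab.trans ((quantileFn_le_iff μ hb _).1 le_rfl)

lemma aemeasurable_quantileFn (μ : Measure ℝ) [IsProbabilityMeasure μ] :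
    AEMeasurable (quantileFn μ) (volume.restrict (Set.Ioo 0 1)) :=
  aemeasurable_restrict_of_monotoneOn measurableSet_Ioo (quantileFn_monotoneOn μ)

lemma isProbabilityMeasure_unit : IsProbabilityMeasure (volume.restrict (Set.Ioo (0 : ℝ) 1)) :=
  ⟨by simp⟩

lemma map_quantileFn (μ : Measure ℝ) [IsProbabilityMeasure μ] :
    (volume.restrict (Set.Ioo (0 : ℝ) 1)).map (quantileFn μ) = μ := by
  have := isProbabilityMeasure_unit
  have := Measure.isProbabilityMeasure_map (aemeasurable_quantileFn μ)
  refine Measure.ext_of_Iic _ _ fun t => ?_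
  rw [Measure.map_apply_of_aemeasurable (aemeasurable_quantileFn μ) measurableSet_Iic]
  have h01 : cdf μ t ≤ 1 := measureReal_le_one (μ := μ) (s := Set.Iic t)
  have hae : (quantileFn μ ⁻¹' Set.Iic t : Set ℝ)
      =ᵐ[volume.restrict (Set.Ioo (0 : ℝ) 1)] Set.Iic (cdf μ t) := by
    filter_upwards [ae_restrict_mem measurableSet_Ioo] with τ hτ
    exact propext (quantileFn_le_iff μ hτ t)
  rw [measure_congr hae, restrict_Ioo_eq_restrict_Ioc, Measure.restrict_apply measurableSet_Iic,
    Set.inter_comm, Set.Ioc_inter_Iic, Real.volume_Ioc, inf_eq_right.2 h01, sub_zero, cdf,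
    ENNReal.ofReal_toReal (measure_ne_top _ _)]

/-- The midpoint of the cell `[i / N, (i + 1) / N)` that contains `τ`. -/
def cellMidpoint (N : ℕ) (τ : ℝ) : ℝ := (2 * (⌊N * τ⌋₊ : ℝ) + 1) / (2 * N)

lemma cellMidpoint_mono (N : ℕ) : Monotone (cellMidpoint N) := by
  intro a b hab
  unfold cellMidpoint
  gcongr

lemma midpoint_mem {N i : ℕ} (hi : i < N) :
    (2 * (i : ℝ) + 1) / (2 * N) ∈ Set.Ioo (0 : ℝ) 1 := by
  have hN : (0 : ℝ) < N := by exact_mod_cast (Nat.zero_le i).trans_lt hi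
  have : (i : ℝ) + 1 ≤ N := by exact_mod_cast hi
  refine ⟨by positivity, ?_⟩
  rw [div_lt_one (by positivity)]
  linarith

lemma cellMidpoint_mem {N : ℕ} (hN : 0 < N) {τ : ℝ} (h : τ ∈ Set.Ioo (0 : ℝ) 1) :
    cellMidpoint N τ ∈ Set.Ioo (0 : ℝ) 1 := by
  have hN' : (0 : ℝ) < N := by exact_mod_cast hN
  refine midpoint_mem ((Nat.floor_lt (mul_nonneg hN'.le h.1.le)).2 ?_)
  nlinarith [h.2]

lemma cell_monotoneOn (μ : Measure ℝ) [IsProbabilityMeasure μ] {N : ℕ} (hN : 0 < N) :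
    MonotoneOn (fun τ => quantileFn μ (cellMidpoint N τ)) (Set.Ioo 0 1) := fun _ ha _ hb hab =>
  quantileFn_monotoneOn μ (cellMidpoint_mem hN ha) (cellMidpoint_mem hN hb)
    (cellMidpoint_mono N hab)

/-- `f (cellMidpoint N τ)` is constant on each of the `N` cells of length `1 / N`, so under the
uniform law on `(0, 1)` its distribution is the uniform mixture of Diracs at these values. -/
lemma map_cell (f : ℝ → ℝ) {N : ℕ} (hN : 0 < N)
    (hf : AEMeasurable (fun τ => f (cellMidpoint N τ)) (volume.restrict (Set.Ioo (0 : ℝ) 1))) :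
    (volume.restrict (Set.Ioo (0 : ℝ) 1)).map (fun τ => f (cellMidpoint N τ))
      = diracMix N (fun i => f ((2 * (i : ℕ) + 1) / (2 * N))) := by
  have hN' : (0 : ℝ) < N := by exact_mod_cast hN
  set J : Fin N → Set ℝ := fun i => Set.Ico ((i : ℕ) / (N : ℝ)) (((i : ℕ) + 1) / (N : ℝ)) with hJ
  have hfl : ∀ i : Fin N, ∀ τ ∈ J i, ⌊N * τ⌋₊ = (i : ℕ) := by
    intro i τ hτ
    have h1 := (div_le_iff₀ hN').1 hτ.1
    have h2 := (lt_div_iff₀ hN').1 hτ.2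
    have h0 : (0 : ℝ) ≤ (i : ℕ) := Nat.cast_nonneg _
    rw [Nat.floor_eq_iff (by linarith)]
    constructor <;> linarith
  have hU : Set.Ico (0 : ℝ) 1 = ⋃ i, J i := by
    ext τ
    simp only [Set.mem_iUnion]
    constructor
    · intro h
      have hnn := mul_nonneg hN'.le h.1
      refine ⟨⟨⌊N * τ⌋₊, (Nat.floor_lt hnn).2 (by nlinarith [h.2])⟩, ?_, ?_⟩
      · exact (div_le_iff₀' hN').2 (Nat.floor_le hnn)
      · exact (lt_div_iff₀' hN').2 (Nat.lt_floor_add_one _)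
    · rintro ⟨i, h1, h2⟩
      refine ⟨le_trans (by positivity) h1, h2.trans_le ?_⟩
      rw [div_le_one hN']
      exact_mod_cast i.2
  have hd : Pairwise (Function.onFun Disjoint J) := by
    intro i j hij
    refine Set.disjoint_left.2 fun τ hi hj => hij (Fin.ext ?_)
    rw [← hfl i τ hi, hfl j τ hj]
  have hsum : volume.restrict (Set.Ioo (0 : ℝ) 1) = ∑ i, volume.restrict (J i) := by
    rw [restrict_Ioo_eq_restrict_Ico, hU, Measure.restrict_iUnion hd (fun i => measurableSet_Ico),
      Measure.sum_fintype]
  ext s hs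
  rw [Measure.map_apply_of_aemeasurable hf hs, hsum, diracMix, Measure.finsetSum_apply,
    Measure.finsetSum_apply]
  refine Finset.sum_congr rfl fun i _ => ?_
  have hconst : ((fun τ => f (cellMidpoint N τ)) ⁻¹' s : Set ℝ) =ᵐ[volume.restrict (J i)]
      ((fun _ : ℝ => f ((2 * (i : ℕ) + 1) / (2 * N))) ⁻¹' s : Set ℝ) := by
    filter_upwards [ae_restrict_mem measurableSet_Ico] with τ hτ
    have : cellMidpoint N τ = (2 * (i : ℕ) + 1) / (2 * N) := by rw [cellMidpoint, hfl i τ hτ]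
    change (f _ ∈ s) = (f _ ∈ s)
    rw [this]
  have hvol : volume (J i) = ENNReal.ofReal (1 / N) := by
    rw [hJ, Real.volume_Ico]
    congr 1
    ring
  rw [measure_congr hconst, Measure.smul_apply, Measure.dirac_apply' _ hs]
  by_cases h : f ((2 * (i : ℕ) + 1) / (2 * N)) ∈ s <;> simp [h, hvol]

/-- The monotone (comonotone) coupling of `μ` with the quantile mixture: both marginals are
written as quantile-type functions of one uniform variable on `(0, 1)`. -/
def monotoneCoupling (μ : Measure ℝ) (N : ℕ) : Measure (ℝ × ℝ) :=
  (volume.restrict (Set.Ioo (0 : ℝ) 1)).map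
    (fun τ => (quantileFn μ τ, quantileFn μ (cellMidpoint N τ)))

lemma isCoupling_monotoneCoupling (μ : Measure ℝ) [IsProbabilityMeasure μ] {N : ℕ} (hN : 0 < N) :
    IsCoupling (monotoneCoupling μ N) μ
      (diracMix N (fun i => quantileFn μ ((2 * (i : ℕ) + 1) / (2 * N)))) := by
  have := isProbabilityMeasure_unit
  have h1 := aemeasurable_quantileFn μ
  have h2 : AEMeasurable (fun τ => quantileFn μ (cellMidpoint N τ))
      (volume.restrict (Set.Ioo (0 : ℝ) 1)) :=
    aemeasurable_restrict_of_monotoneOn measurableSet_Ioo (cell_monotoneOn μ hN)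
  refine ⟨Measure.isProbabilityMeasure_map (h1.prodMk h2), ?_, ?_⟩
  · rw [monotoneCoupling, AEMeasurable.map_map_of_aemeasurable measurable_fst.aemeasurable
      (h1.prodMk h2)]
    exact map_quantileFn μ
  · rw [monotoneCoupling, AEMeasurable.map_map_of_aemeasurable measurable_snd.aemeasurable
      (h1.prodMk h2)]
    exact map_cell (quantileFn μ) hN h2

lemma measure_symmDiff_eq_of_ae_le {α : Type*} [MeasurableSpace α] {π : Measure α}
    [IsFiniteMeasure π] {A B : Set α} (hA : MeasurableSet A)
    (h : A ≤ᵐ[π] B) : π (symmDiff A B) = ENNReal.ofReal |π.real A - π.real B| := by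
  have h0 : π (A \ B) = 0 := ae_le_set.1 h
  have hs : π (symmDiff A B) = π (B \ A) := by
    refine le_antisymm ?_ (measure_mono fun x hx => Or.inr hx)
    calc π (symmDiff A B) ≤ π (A \ B) + π (B \ A) := measure_union_le _ _
      _ = π (B \ A) := by rw [h0, zero_add]
  have hle : π.real A ≤ π.real B := ENNReal.toReal_mono (measure_ne_top _ _) (measure_mono_ae h)
  have hAB : π (B ∩ A) = π A := by
    refine le_antisymm (measure_mono Set.inter_subset_right) (measure_mono_ae ?_)
    filter_upwards [h] with x hx hxA using ⟨hx hxA, hxA⟩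
  have hd := measure_inter_add_sdiff (μ := π) B hA
  rw [hAB] at hd
  have hd' : π.real A + π.real (B \ A) = π.real B := by
    simp only [Measure.real]
    rw [← ENNReal.toReal_add (measure_ne_top _ _) (measure_ne_top _ _), hd]
  rw [hs, abs_sub_comm, abs_of_nonneg (sub_nonneg.2 hle), ← hd', add_sub_cancel_left,
    ofReal_measureReal]

/-- The monotone coupling attains, at every threshold, the lower bound of `abs_cdf_sub_le`. -/
lemma monotoneCoupling_apply (μ : Measure ℝ) [IsProbabilityMeasure μ] {N : ℕ} (hN : 0 < N)
    (t : ℝ) : monotoneCoupling μ N {xy | ¬ (xy.1 ≤ t ↔ xy.2 ≤ t)}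
      = ENNReal.ofReal |cdf μ t -
          cdf (diracMix N (fun i => quantileFn μ ((2 * (i : ℕ) + 1) / (2 * N)))) t| := by
  have hc := isCoupling_monotoneCoupling μ hN
  have := hc.1
  rw [(coupling_cdf hc t).1, (coupling_cdf hc t).2, setOf_not_iff_eq_symmDiff]
  have h1 := quantileFn_monotoneOn μ
  have h2 := cell_monotoneOn μ hN
  have hm : AEMeasurable (fun τ => (quantileFn μ τ, quantileFn μ (cellMidpoint N τ)))
      (volume.restrict (Set.Ioo (0 : ℝ) 1)) :=
    (aemeasurable_quantileFn μ).prodMk (aemeasurable_restrict_of_monotoneOn measurableSet_Ioo h2)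
  -- the sublevel sets of two monotone functions are nested
  have hnest : (∀ τ ∈ Set.Ioo (0 : ℝ) 1, quantileFn μ τ ≤ t → quantileFn μ (cellMidpoint N τ) ≤ t)
      ∨ (∀ τ ∈ Set.Ioo (0 : ℝ) 1, quantileFn μ (cellMidpoint N τ) ≤ t → quantileFn μ τ ≤ t) := by
    by_contra! hcon
    obtain ⟨⟨a, ha, ha1, ha2⟩, b, hb, hb1, hb2⟩ := hcon
    rcases le_total a b with hab | hab
    · exact absurd ((h2 ha hb hab).trans hb1) (not_le.2 ha2)
    · exact absurd ((h1 hb ha hab).trans ha1) (not_le.2 hb2)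
  rcases hnest with h | h
  · refine measure_symmDiff_eq_of_ae_le (measurableSet_fst_le t) ?_
    refine (ae_map_iff hm ((measurableSet_fst_le t).imp (measurableSet_snd_le t))).2 ?_
    filter_upwards [ae_restrict_mem measurableSet_Ioo] with τ hτ using h τ hτ
  · rw [symmDiff_comm, abs_sub_comm]
    refine measure_symmDiff_eq_of_ae_le (measurableSet_snd_le t) ?_
    refine (ae_map_iff hm ((measurableSet_snd_le t).imp (measurableSet_fst_le t))).2 ?_
    filter_upwards [ae_restrict_mem measurableSet_Ioo] with τ hτ using h τ hτ

lemma cdf_diracMix (N : ℕ) (θ : Fin N → ℝ) (t : ℝ) :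
    cdf (diracMix N θ) t = (Finset.univ.filter fun i => θ i ≤ t).card / (N : ℝ) := by
  have h : ∀ i, (ENNReal.ofReal (1 / N) • Measure.dirac (θ i)) (Set.Iic t)
      = if θ i ≤ t then ENNReal.ofReal (1 / N) else 0 := by
    intro i
    by_cases hi : θ i ≤ t <;> simp [Measure.dirac_apply' _ measurableSet_Iic, hi]
  rw [cdf, diracMix, Measure.finsetSum_apply, Finset.sum_congr rfl fun i _ => h i,
    ← Finset.sum_filter, Finset.sum_const, nsmul_eq_mul, ENNReal.toReal_mul,
    ENNReal.toReal_ofReal (by positivity), ENNReal.toReal_natCast, mul_one_div]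

/-- Rounding `x` to `⌊x + 1/2⌋` gives a nearest integer. -/
lemma abs_sub_round_le (x : ℝ) (hx : 0 ≤ x) (k : ℕ) :
    |x - (⌊x + 1 / 2⌋₊ : ℝ)| ≤ |x - k| := by
  set m := ⌊x + 1 / 2⌋₊ with hm
  have h1 : (m : ℝ) ≤ x + 1 / 2 := Nat.floor_le (by linarith)
  have h2 : x + 1 / 2 < m + 1 := Nat.lt_floor_add_one _
  rcases lt_trichotomy k m with h | h | h
  · have : (k : ℝ) + 1 ≤ m := by exact_mod_cast h
    rw [abs_le]
    have := le_abs_self (x - k)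
    constructor <;> linarith
  · rw [h]
  · have : (m : ℝ) + 1 ≤ k := by exact_mod_cast h
    rw [abs_le]
    have := neg_abs_le (x - k)
    constructor <;> linarith

/-- At every `t` the CDF of the quantile mixture is a point of the grid `{0, 1/N, …, 1}` nearest to
`F_μ(t)`, while the CDF of any other mixture also takes its value in that grid. -/
lemma cdf_quantile_mix_nearest (μ : Measure ℝ) [IsProbabilityMeasure μ] {N : ℕ} (hN : 0 < N)
    (θ : Fin N → ℝ) (t : ℝ) :
    |cdf μ t - cdf (diracMix N (fun i => quantileFn μ ((2 * (i : ℕ) + 1) / (2 * N)))) t|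
      ≤ |cdf μ t - cdf (diracMix N θ) t| := by
  have hN' : (0 : ℝ) < N := by exact_mod_cast hN
  have h1 : cdf μ t ≤ 1 := measureReal_le_one (μ := μ) (s := Set.Iic t)
  have h0 : 0 ≤ cdf μ t := ENNReal.toReal_nonneg
  -- by the Galois connection, atom `i` lies at or below `t` exactly when `i + 1/2 ≤ N * F_μ(t)`
  have hcard : (Finset.univ.filter fun i : Fin N =>
      quantileFn μ ((2 * (i : ℕ) + 1) / (2 * N)) ≤ t).card = ⌊N * cdf μ t + 1 / 2⌋₊ := by
    have hM : ⌊N * cdf μ t + 1 / 2⌋₊ ≤ N := by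
      refine Nat.lt_succ_iff.1 ((Nat.floor_lt (by positivity)).2 ?_)
      push_cast
      nlinarith
    have : (Finset.univ.filter fun i : Fin N =>
        quantileFn μ ((2 * (i : ℕ) + 1) / (2 * N)) ≤ t)
        = Finset.univ.filter fun i : Fin N => (i : ℕ) < ⌊N * cdf μ t + 1 / 2⌋₊ := by
      refine Finset.filter_congr fun i _ => ?_
      rw [quantileFn_le_iff μ (midpoint_mem i.2), div_le_iff₀ (by positivity), Nat.lt_iff_add_one_le,
        Nat.le_floor_iff (by positivity)]
      push_cast
      constructor <;> intro h <;> linarith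
    rw [this, Fin.card_filter_val_lt, min_eq_right hM]
  have hscale : ∀ k : ℕ, |cdf μ t - k / (N : ℝ)| = |N * cdf μ t - k| / N := by
    intro k
    rw [← abs_of_pos hN', ← abs_div, abs_of_pos hN']
    congr 1
    field_simp
  rw [cdf_diracMix, cdf_diracMix, hcard, hscale, hscale]
  exact div_le_div_of_nonneg_right (abs_sub_round_le _ (by positivity) _) hN'.le

lemma integrable_diracMix (N : ℕ) (θ : Fin N → ℝ) : Integrable (fun x : ℝ => x) (diracMix N θ) := by
  unfold diracMix
  rw [integrable_finsetSum_measure]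
  intro i _
  exact (integrable_dirac (by simp)).smul_measure ENNReal.ofReal_ne_top

lemma isProbabilityMeasure_diracMix {N : ℕ} (hN : 0 < N) (θ : Fin N → ℝ) :
    IsProbabilityMeasure (diracMix N θ) := by
  have hN' : (N : ℝ) ≠ 0 := by exact_mod_cast hN.ne'
  constructor
  rw [diracMix, Measure.finsetSum_apply]
  simp only [Measure.smul_apply, measure_univ, smul_eq_mul, mul_one, Finset.sum_const,
    Finset.card_univ, Fintype.card_fin, nsmul_eq_mul]
  rw [← ENNReal.ofReal_natCast, ← ENNReal.ofReal_mul (by positivity), mul_one_div_cancel hN',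
    ENNReal.ofReal_one]

/-- Placing the atoms at the quantile midpoints `F_μ⁻¹((2i−1)/(2N))`, `i = 1, …, N`,
minimizes the 1-Wasserstein distance from `μ` to a uniform mixture of `N` Diracs. -/
theorem diracMix_quantile_optimal (μ : Measure ℝ) (hμ : IsProbabilityMeasure μ)
    (hmom : HasFiniteMoment 1 μ) (N : ℕ) (hN : 0 < N) :
    ∀ θ : Fin N → ℝ,
      Wp 1 μ (diracMix N (fun i => quantileFn μ ((2 * (i : ℕ) + 1) / (2 * N)))) ≤
        Wp 1 μ (diracMix N θ) := by
  intro θ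
  have := isProbabilityMeasure_diracMix hN θ
  simp only [Wp, div_one, Real.rpow_one]
  refine le_csInf ⟨_, μ.prod (diracMix N θ), ⟨inferInstance, by simp, by simp⟩, rfl⟩ ?_
  rintro c ⟨π, hπ, rfl⟩
  have hb : BddBelow (transportCosts 1 μ
      (diracMix N (fun i => quantileFn μ ((2 * (i : ℕ) + 1) / (2 * N))))) := by
    refine ⟨0, ?_⟩
    rintro _ ⟨ρ, -, rfl⟩
    exact integral_nonneg fun xy => by positivity
  refine (csInf_le hb ⟨_, isCoupling_monotoneCoupling μ hN, rfl⟩).trans ?_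
  have hprob := hπ.1
  have hprob' := (isCoupling_monotoneCoupling μ hN).1
  simp only [Real.rpow_one]
  have hcont : Continuous fun xy : ℝ × ℝ => |xy.1 - xy.2| := by fun_prop
  rw [integral_eq_lintegral_of_nonneg_ae (.of_forall fun _ => abs_nonneg _)
      hcont.aestronglyMeasurable,
    integral_eq_lintegral_of_nonneg_ae (.of_forall fun _ => abs_nonneg _)
      hcont.aestronglyMeasurable]
  -- the cost of `π` is finite, so the comparison can be made in `ℝ≥0∞`
  refine ENNReal.toReal_mono ?_ ?_
  · have hx : Integrable (fun x : ℝ => x) μ := by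
      refine (integrable_norm_iff measurable_id.aestronglyMeasurable).1 ?_
      simpa [HasFiniteMoment] using hmom
    have hy := integrable_diracMix N θ
    rw [← hπ.2.1] at hx
    rw [← hπ.2.2] at hy
    have hx' := hx.comp_measurable measurable_fst
    have hy' := hy.comp_measurable measurable_snd
    have h := (hx'.sub hy').abs.lintegral_lt_top
    exact h.ne
  · rw [cost_eq_lintegral, cost_eq_lintegral]
    refine lintegral_mono fun t => ?_
    rw [monotoneCoupling_apply μ hN]
    exact (ENNReal.ofReal_le_ofReal (cdf_quantile_mix_nearest μ hN θ t)).trans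
      (abs_cdf_sub_le hπ t)
end
end

section
/- Let S and A be nonempty finite sets with a finite MDP (r, P, γ) and temperature α > 0. Let π_old be a stationary policy with π_old(a|s) > 0 for all (s,a), and let Q^{π_old} be the unique fixed point of the soft Bellman operator T^{π_old}. Let π_new be a stationary policy with π_new(a|s) > 0 for all (s,a) such that for every state s, the distribution π_new(·|s) maximizes the map q ↦ Σ_a q(a)·(Q^{π_old}(s,a) − α log q(a)) over all probability distributions q on A. Then the soft Q-function improves pointwise: Q^{π_new}(s,a) ≥ Q^{π_old}(s,a) for all (s,a) ∈ S × A, where Q^{π_new} is the unique fixed point of T^{π_new}. -/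
/-!
The proof is a maximum principle. Let `M` be the largest value of `Qold - Qnew` over the finite
set `S × A`. Maximality of `polNew` for `Qold` bounds the old soft state value by
`∑ a, polNew s a * (Qold s a - α log (polNew s a))`, which exceeds the new soft state value by at
most `M`. Inserting this into the two fixed-point equations at a maximizing pair gives
`M ≤ γ * M`, and `γ < 1` forces `M ≤ 0`.
-/

noncomputable section

/-- The soft Bellman operator for entropy-regularized RL:
`(T^π Q)(s,a) = r(s,a) + γ ∑_{s'} P(s'|s,a) ∑_{a'} π(a'|s')(Q(s',a') − α log π(a'|s'))`. -/
def softBellman {S A : Type*} [Fintype S] [Fintype A]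
    (r : S → A → ℝ) (P : S → A → S → ℝ) (pol : S → A → ℝ) (γ α : ℝ)
    (Q : S → A → ℝ) (s : S) (a : A) : ℝ :=
  r s a + γ * ∑ s', P s a s' *
    ∑ a', pol s' a' * (Q s' a' - α * Real.log (pol s' a'))

/-- Soft policy improvement: if `π_new(·|s)` maximizes
`q ↦ ∑_a q(a)(Q^{π_old}(s,a) − α log q(a))` over probability distributions on `A`
at every state `s`, then the soft Q-function improves pointwise:
`Q^{π_new}(s,a) ≥ Q^{π_old}(s,a)` for all `(s,a)`. -/
theorem soft_policy_improvement {S A : Type*} [Fintype S] [Fintype A]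
    [Nonempty S] [Nonempty A]
    (r : S → A → ℝ) (P : S → A → S → ℝ) (γ α : ℝ)
    (hγ : γ ∈ Set.Ioo (0 : ℝ) 1) (hα : 0 < α)
    (hP : ∀ s a, (∀ s', 0 ≤ P s a s') ∧ ∑ s', P s a s' = 1)
    (polOld polNew : S → A → ℝ)
    (hpolOld : ∀ s, (∀ a, 0 < polOld s a) ∧ ∑ a, polOld s a = 1)
    (hpolNew : ∀ s, (∀ a, 0 < polNew s a) ∧ ∑ a, polNew s a = 1)
    (Qold Qnew : S → A → ℝ)
    (hQold : softBellman r P polOld γ α Qold = Qold)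
    (hQnew : softBellman r P polNew γ α Qnew = Qnew)
    (hmax : ∀ s : S, ∀ q : A → ℝ, (∀ a, 0 ≤ q a) → ∑ a, q a = 1 →
      ∑ a, q a * (Qold s a - α * Real.log (q a)) ≤
        ∑ a, polNew s a * (Qold s a - α * Real.log (polNew s a))) :
    ∀ s a, Qold s a ≤ Qnew s a := by
  -- `(s₀, a₀)` maximizes the gap `Qold - Qnew`; call the maximum `M`.
  obtain ⟨⟨s₀, a₀⟩, hM⟩ := Finite.exists_max (fun x : S × A => Qold x.1 x.2 - Qnew x.1 x.2)
  set M := Qold s₀ a₀ - Qnew s₀ a₀ with hMdef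
  have hgap : ∀ s a, Qold s a ≤ Qnew s a + M := fun s a => by
    have := hM (s, a)
    simp only at this
    linarith
  have hstate : ∀ s, ∑ a, polOld s a * (Qold s a - α * Real.log (polOld s a)) ≤
      ∑ a, polNew s a * (Qnew s a - α * Real.log (polNew s a)) + M := fun s => by
    calc ∑ a, polOld s a * (Qold s a - α * Real.log (polOld s a))
        ≤ ∑ a, polNew s a * (Qold s a - α * Real.log (polNew s a)) :=
          hmax s (polOld s) (fun a => ((hpolOld s).1 a).le) (hpolOld s).2
      _ ≤ ∑ a, (polNew s a * (Qnew s a - α * Real.log (polNew s a)) + polNew s a * M) := by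
          refine Finset.sum_le_sum fun a _ => ?_
          rw [← mul_add]
          exact mul_le_mul_of_nonneg_left (by linarith [hgap s a]) ((hpolNew s).1 a).le
      _ = _ := by rw [Finset.sum_add_distrib, ← Finset.sum_mul, (hpolNew s).2, one_mul]
  have hnext : ∑ s', P s₀ a₀ s' *
        ∑ a', polOld s' a' * (Qold s' a' - α * Real.log (polOld s' a')) ≤
      ∑ s', P s₀ a₀ s' *
        ∑ a', polNew s' a' * (Qnew s' a' - α * Real.log (polNew s' a')) + M := by
    calc _ ≤ ∑ s', (P s₀ a₀ s' *
        ∑ a', polNew s' a' * (Qnew s' a' - α * Real.log (polNew s' a')) + P s₀ a₀ s' * M) := by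
          refine Finset.sum_le_sum fun s' _ => ?_
          rw [← mul_add]
          exact mul_le_mul_of_nonneg_left (hstate s') ((hP s₀ a₀).1 s')
      _ = _ := by rw [Finset.sum_add_distrib, ← Finset.sum_mul, (hP s₀ a₀).2, one_mul]
  have hold := congrFun (congrFun hQold s₀) a₀
  have hnew := congrFun (congrFun hQnew s₀) a₀
  unfold softBellman at hold hnew
  have hcontract : M ≤ γ * M := by
    have := mul_le_mul_of_nonneg_left hnext hγ.1.le
    rw [mul_add] at this
    linarith
  have hM0 : M ≤ 0 := by nlinarith [hγ.2]
  intro s a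
  linarith [hgap s a]
end
end
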